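/- Let k be an odd positive integer, k̄ = k+2, and let (v,z,n) satisfy v ∣ k̄, k̄ ∣ v², (v²/k̄) ∣ (4z²−1), and n ∈ {0,1}. Say that a quadruple of integers (a,c,a',c') with a,a' ∈ {0,…,k} satisfies condition P if: a' = J^{(a+c)n} a (where J^m a = a for m even and k−a for m odd), c' ≡ c + (a+c)n (mod 2), and c' ≡ 2cz (mod v²/k̄). Then for any two quadruples (a,c,a',c') and (d,f,d',f') satisfying P, there exist α, α' ∈ {0,…,k} and integers γ, γ' such that (α,γ,α',γ') satisfies P, the fusion number N^{(α, γk̄/v)}_{(a, ck̄/v),(d, fk̄/v)} is nonzero, and the fusion number N^{(α', γ'k̄/v)}_{(a', c'k̄/v),(d', f'k̄/v)} is nonzero. -/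

import Mathlib

/-- Parity `[x] ∈ {0,1}` of an integer. -/
def par (x : ℤ) : ℤ := x % 2

/-- `J^m a`: the m-fold action of the su(2) simple current `J : a ↦ k - a`. -/
def Jpow (k m a : ℤ) : ℤ := if m % 2 = 0 then a else k - a

/-- The su(2) level-`k` fusion number `N^{su2}(l; a, a')`. -/
def Nsu2 (k l a a' : ℤ) : ℤ :=
  if |a - a'| ≤ l ∧ l ≤ min (a + a') (2 * k - a - a') ∧ (a + a' + l) % 2 = 0 then 1 else 0

/-- The fusion number `N^{(α,Γ)}_{(a,C),(d,F)}` of the level-`k` N=2 minimal model. -/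
def Nmin (k α Γ a C d F : ℤ) : ℤ :=
  if par (a + C) * par (d + F) = 0 then
    Nsu2 k α a d * (if C + F ≡ Γ [ZMOD (2 * (k + 2))] then 1 else 0)
  else
    Nsu2 k (k - α) a d * (if C + F ≡ Γ + (k + 2) [ZMOD (2 * (k + 2))] then 1 else 0)

/-- Condition `P` describing the nonzero entries of the odd-level physical
invariant `M⁰[v,z,n]`. -/
def P0 (k v z n a c a' c' : ℤ) : Prop :=
  a' = Jpow k ((a + c) * n) a ∧
  c' ≡ c + (a + c) * n [ZMOD 2] ∧
  c' ≡ 2 * c * z [ZMOD (v ^ 2 / (k + 2))]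

/-!
Fusion in the minimal model is `su(2)` fusion twisted by the simple current: with
`e = (a + C) (d + F)`, the field `(α, Γ)` occurs in `(a, C) × (d, F)` exactly when `J^e α` occurs
in `a × d` and `C + F ≡ Γ + e (k + 2) [ZMOD 2 (k + 2)]`.
Condition `P` sends `(a, c)` to a pair with `a' = J^m a` and `c' ≡ c + m [ZMOD 2]`, which keeps the
parity of `a + c` and therefore that of `e`. Since `su(2)` fusion is equivariant under `J`, every
`(α, γ)` in the fusion of the unprimed fields has the partner
`(J^((α + γ) n) α, γ + (c' - c) + (f' - f))` in the fusion of the primed ones; it satisfies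
the congruence modulo `v² / (k + 2)` because that modulus divides `v` and `γ ≡ c + f [ZMOD v]`.
-/

lemma Jpow_congr {m m' : ℤ} (h : m ≡ m' [ZMOD 2]) (k a : ℤ) : Jpow k m a = Jpow k m' a := by
  unfold Jpow
  rw [h.eq]

lemma Jpow_add (k m m' a : ℤ) : Jpow k (m + m') a = Jpow k m (Jpow k m' a) := by
  unfold Jpow
  split_ifs <;> omega

lemma Jpow_Jpow_self (k m a : ℤ) : Jpow k m (Jpow k m a) = a := by
  unfold Jpow
  split_ifs <;> omega

lemma Jpow_mem_range_iff {k m a : ℤ} : (0 ≤ Jpow k m a ∧ Jpow k m a ≤ k) ↔ 0 ≤ a ∧ a ≤ k := by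
  unfold Jpow
  split_ifs <;> omega

lemma Jpow_modEq_add {k : ℤ} (hk : Odd k) (m a : ℤ) : Jpow k m a ≡ a + m [ZMOD 2] := by
  have hk2 : k % 2 = 1 := Int.odd_iff.mp hk
  unfold Jpow Int.ModEq
  split_ifs <;> omega

lemma Nsu2_ne_zero_iff {k l a d : ℤ} :
    Nsu2 k l a d ≠ 0 ↔
      |a - d| ≤ l ∧ l ≤ min (a + d) (2 * k - a - d) ∧ (a + d + l) % 2 = 0 := by
  simp only [Nsu2, ne_eq, ite_eq_right_iff, one_ne_zero, imp_false, not_not]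

lemma mem_range_of_Nsu2_ne_zero {k l a d : ℤ} (h : Nsu2 k l a d ≠ 0) : 0 ≤ l ∧ l ≤ k := by
  rw [Nsu2_ne_zero_iff, abs_le, le_min_iff] at h
  omega

lemma Nsu2_abs_sub_ne_zero {k a d : ℤ} (ha : 0 ≤ a ∧ a ≤ k) (hd : 0 ≤ d ∧ d ≤ k) :
    Nsu2 k |a - d| a d ≠ 0 := by
  rw [Nsu2_ne_zero_iff, le_min_iff]
  rcases abs_cases (a - d) with h | h <;> omega

lemma Nsu2_Jpow_ne_zero_iff {k l a d x y : ℤ} :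
    Nsu2 k (Jpow k (x + y) l) (Jpow k x a) (Jpow k y d) ≠ 0 ↔ Nsu2 k l a d ≠ 0 := by
  simp only [Nsu2_ne_zero_iff, abs_le, le_min_iff, Jpow]
  split_ifs <;> omega

lemma Nmin_ne_zero_iff {k α Γ a C d F e : ℤ} (he : e ≡ (a + C) * (d + F) [ZMOD 2]) :
    Nmin k α Γ a C d F ≠ 0 ↔
      Nsu2 k (Jpow k e α) a d ≠ 0 ∧ C + F ≡ Γ + e * (k + 2) [ZMOD 2 * (k + 2)] := by
  have hpar : par (a + C) * par (d + F) = 0 ↔ e % 2 = 0 := by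
    rw [he.eq, ← Int.even_iff, Int.even_mul, Int.even_iff, Int.even_iff, mul_eq_zero, par, par]
  have hshift : Γ + e * (k + 2) ≡ Γ + e % 2 * (k + 2) [ZMOD 2 * (k + 2)] :=
    ((Int.mod_modEq e 2).symm.mul_right').add_left Γ
  have hcongr : C + F ≡ Γ + e * (k + 2) [ZMOD 2 * (k + 2)] ↔
      C + F ≡ Γ + e % 2 * (k + 2) [ZMOD 2 * (k + 2)] :=
    ⟨fun h => h.trans hshift, fun h => h.trans hshift.symm⟩
  rw [hcongr]
  unfold Nmin Jpow
  rcases Int.emod_two_eq_zero_or_one e with h | h <;> simp [hpar, h, and_comm]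

lemma mem_range_of_Nmin_ne_zero {k α Γ a C d F : ℤ} (h : Nmin k α Γ a C d F ≠ 0) :
    0 ≤ α ∧ α ≤ k :=
  Jpow_mem_range_iff.mp (mem_range_of_Nsu2_ne_zero ((Nmin_ne_zero_iff rfl).mp h).1)

lemma Nmin_mul_ne_zero_iff {k v w α γ a c d f e : ℤ} (hvw : k + 2 = v * w) (hw : Odd w)
    (he : e ≡ (a + c) * (d + f) [ZMOD 2]) :
    Nmin k α (γ * w) a (c * w) d (f * w) ≠ 0 ↔
      Nsu2 k (Jpow k e α) a d ≠ 0 ∧ c + f ≡ γ + e * v [ZMOD 2 * v] := by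
  have hscale (b x : ℤ) : b + x ≡ b + x * w [ZMOD 2] := by
    have hw1 : w ≡ 1 [ZMOD 2] := Int.odd_iff.mp hw
    simpa only [mul_one] using ((hw1.mul_left x).add_left b).symm
  have hw0 : w ≠ 0 := by
    rintro rfl
    exact absurd hw (by decide)
  have hcancel : c * w + f * w ≡ γ * w + e * (v * w) [ZMOD 2 * (v * w)] ↔
      c + f ≡ γ + e * v [ZMOD 2 * v] := by
    rw [← mul_assoc, ← mul_assoc, ← add_mul, ← add_mul]
    exact Int.ModEq.mul_right_cancel_iff' hw0
  rw [Nmin_ne_zero_iff (he.trans ((hscale a c).mul (hscale d f))), hvw, hcancel]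

lemma exists_Nmin_mul_ne_zero {k v w a d : ℤ} (hvw : k + 2 = v * w) (hw : Odd w)
    (ha : 0 ≤ a ∧ a ≤ k) (hd : 0 ≤ d ∧ d ≤ k) (c f : ℤ) :
    ∃ α γ : ℤ, Nmin k α (γ * w) a (c * w) d (f * w) ≠ 0 := by
  let e := (a + c) * (d + f)
  refine ⟨Jpow k e |a - d|, c + f - e * v, (Nmin_mul_ne_zero_iff hvw hw rfl).mpr ⟨?_, ?_⟩⟩
  · rw [Jpow_Jpow_self]
    exact Nsu2_abs_sub_ne_zero ha hd
  · rw [sub_add_cancel]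

lemma odd_and_odd_of_add_two_eq_mul {k v w : ℤ} (hk : Odd k) (hvw : k + 2 = v * w) :
    Odd v ∧ Odd w :=
  Int.odd_mul.mp (hvw ▸ hk.add_even even_two)

lemma modEq_two_of_Nmin_mul_ne_zero {k v w α γ a c d f : ℤ} (hk : Odd k) (hvw : k + 2 = v * w)
    (hN : Nmin k α (γ * w) a (c * w) d (f * w) ≠ 0) :
    α + γ ≡ (a + c) + (d + f) [ZMOD 2] := by
  obtain ⟨hv, hw⟩ := odd_and_odd_of_add_two_eq_mul hk hvw
  let e := (a + c) * (d + f)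
  obtain ⟨hsu2, hγ⟩ := (Nmin_mul_ne_zero_iff (e := e) hvw hw rfl).mp hN
  have hl : (a + d + Jpow k e α) % 2 = 0 := (Nsu2_ne_zero_iff.mp hsu2).2.2
  have hJ : Jpow k e α ≡ α + e [ZMOD 2] := Jpow_modEq_add hk e α
  have hv1 : v ≡ 1 [ZMOD 2] := Int.odd_iff.mp hv
  have hγ2 : c + f ≡ γ + e [ZMOD 2] := by
    simpa only [mul_one] using (hγ.of_mul_right v).trans ((hv1.mul_left e).add_left γ)
  unfold Int.ModEq at *
  omega

lemma P0.add_modEq_two {k v z n a c a' c' : ℤ} (hk : Odd k) (h : P0 k v z n a c a' c') :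
    a' + c' ≡ a + c [ZMOD 2] := by
  obtain ⟨ha', hc', -⟩ := h
  have hJ := Jpow_modEq_add hk ((a + c) * n) a
  rw [← ha'] at hJ
  unfold Int.ModEq at *
  omega

lemma sq_ediv_dvd {v K : ℤ} (h : v ∣ K) (h' : K ∣ v ^ 2) : v ^ 2 / K ∣ v := by
  rcases eq_or_ne v 0 with rfl | hv
  · exact dvd_zero _
  · obtain ⟨w, rfl⟩ := h
    refine ⟨w, mul_left_cancel₀ hv ?_⟩
    rw [← sq, mul_left_comm, Int.ediv_mul_cancel h']

section Partner

variable {k v w z n a c a' c' d f d' f' α γ : ℤ}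

lemma P0.partner (hk : Odd k) (hvw : k + 2 = v * w) (hdvd : v ^ 2 / (k + 2) ∣ v)
    (hP1 : P0 k v z n a c a' c') (hP2 : P0 k v z n d f d' f')
    (hN : Nmin k α (γ * w) a (c * w) d (f * w) ≠ 0) :
    P0 k v z n α γ (Jpow k ((α + γ) * n) α) (γ + (c' - c) + (f' - f)) := by
  have hw : Odd w := (odd_and_odd_of_add_two_eq_mul hk hvw).2
  have hpar := modEq_two_of_Nmin_mul_ne_zero hk hvw hN
  obtain ⟨-, hc2, hcm⟩ := hP1
  obtain ⟨-, hf2, hfm⟩ := hP2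
  refine ⟨rfl, ?_, ?_⟩
  · calc γ + (c' - c) + (f' - f)
      _ ≡ γ + (c + (a + c) * n - c) + (f + (d + f) * n - f) [ZMOD 2] := by gcongr
      _ = γ + ((a + c) + (d + f)) * n := by ring
      _ ≡ γ + (α + γ) * n [ZMOD 2] := (hpar.symm.mul_right n).add_left γ
  · have hγ : γ ≡ c + f [ZMOD v ^ 2 / (k + 2)] := by
      have hγv := ((Nmin_mul_ne_zero_iff hvw hw rfl).mp hN).2.of_mul_left 2
      exact (Int.modEq_add_mul_modulus_iff.mp hγv).symm.of_dvd hdvd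
    calc γ + (c' - c) + (f' - f)
      _ ≡ c + f + (2 * c * z - c) + (2 * f * z - f) [ZMOD v ^ 2 / (k + 2)] := by gcongr
      _ = 2 * (c + f) * z := by ring
      _ ≡ 2 * γ * z [ZMOD v ^ 2 / (k + 2)] := (hγ.symm.mul_left 2).mul_right z

lemma Nmin_partner_ne_zero (hk : Odd k) (hvw : k + 2 = v * w)
    (hP1 : P0 k v z n a c a' c') (hP2 : P0 k v z n d f d' f')
    (hN : Nmin k α (γ * w) a (c * w) d (f * w) ≠ 0) :
    Nmin k (Jpow k ((α + γ) * n) α) ((γ + (c' - c) + (f' - f)) * w)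
      a' (c' * w) d' (f' * w) ≠ 0 := by
  have hw : Odd w := (odd_and_odd_of_add_two_eq_mul hk hvw).2
  have hpar := modEq_two_of_Nmin_mul_ne_zero hk hvw hN
  let e := (a + c) * (d + f)
  have he' : e ≡ (a' + c') * (d' + f') [ZMOD 2] :=
    ((hP1.add_modEq_two hk).mul (hP2.add_modEq_two hk)).symm
  obtain ⟨hsu2, hγ⟩ := (Nmin_mul_ne_zero_iff (e := e) hvw hw rfl).mp hN
  refine (Nmin_mul_ne_zero_iff hvw hw he').mpr ⟨?_, ?_⟩
  · have hJ : Jpow k e (Jpow k ((α + γ) * n) α) =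
        Jpow k ((a + c) * n + (d + f) * n) (Jpow k e α) := by
      rw [← Jpow_add, ← Jpow_add, add_comm, ← add_mul]
      exact Jpow_congr ((hpar.mul_right n).add_right e) k α
    rw [hJ, hP1.1, hP2.1]
    exact Nsu2_Jpow_ne_zero_iff.mpr hsu2
  · calc c' + f'
      _ = c + f + ((c' - c) + (f' - f)) := by ring
      _ ≡ γ + e * v + ((c' - c) + (f' - f)) [ZMOD 2 * v] := hγ.add_right _
      _ = γ + (c' - c) + (f' - f) + e * v := by ring

end Partner

theorem fusion_consistency_M0_general {k v z n : ℤ} (hk : Odd k)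
    (hv1 : v ∣ k + 2) (hv2 : (k + 2) ∣ v ^ 2)
    {a c a' c' d f d' f' : ℤ} (ha : 0 ≤ a ∧ a ≤ k) (hd : 0 ≤ d ∧ d ≤ k)
    (hP1 : P0 k v z n a c a' c') (hP2 : P0 k v z n d f d' f') :
    (∃ α γ : ℤ,
      Nmin k α (γ * ((k + 2) / v)) a (c * ((k + 2) / v)) d (f * ((k + 2) / v)) ≠ 0) ∧
    ∀ α γ : ℤ,
      Nmin k α (γ * ((k + 2) / v)) a (c * ((k + 2) / v)) d (f * ((k + 2) / v)) ≠ 0 →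
      ∃ α' γ' : ℤ,
        (0 ≤ α' ∧ α' ≤ k) ∧
        P0 k v z n α γ α' γ' ∧
        Nmin k α' (γ' * ((k + 2) / v)) a' (c' * ((k + 2) / v)) d' (f' * ((k + 2) / v)) ≠ 0 := by
  have hvw : k + 2 = v * ((k + 2) / v) := (Int.mul_ediv_cancel' hv1).symm
  have hw : Odd ((k + 2) / v) := (odd_and_odd_of_add_two_eq_mul hk hvw).2
  refine ⟨exists_Nmin_mul_ne_zero hvw hw ha hd c f, fun α γ hN => ?_⟩
  have hN' := Nmin_partner_ne_zero hk hvw hP1 hP2 hN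
  exact ⟨_, _, mem_range_of_Nmin_ne_zero hN',
    hP1.partner hk hvw (sq_ediv_dvd hv1 hv2) hP2 hN, hN'⟩

/-- the fusion of any two fields appearing in the physical invariant
`M⁰[v,z,n]` (`k` odd) contains a field also appearing in `M⁰[v,z,n]`. -/
theorem fusion_consistency_M0 (k v z n : ℤ) (hk : Odd k) (hkpos : 0 < k)
    (hv1 : v ∣ k + 2) (hv2 : (k + 2) ∣ v ^ 2)
    (hz : (v ^ 2 / (k + 2)) ∣ (4 * z ^ 2 - 1)) (hn : n = 0 ∨ n = 1)
    (a c a' c' d f d' f' : ℤ)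
    (ha : 0 ≤ a ∧ a ≤ k) (ha' : 0 ≤ a' ∧ a' ≤ k)
    (hd : 0 ≤ d ∧ d ≤ k) (hd' : 0 ≤ d' ∧ d' ≤ k)
    (hP1 : P0 k v z n a c a' c') (hP2 : P0 k v z n d f d' f') :
    ∃ α γ α' γ' : ℤ,
      (0 ≤ α ∧ α ≤ k) ∧ (0 ≤ α' ∧ α' ≤ k) ∧
      P0 k v z n α γ α' γ' ∧
      Nmin k α (γ * ((k + 2) / v)) a (c * ((k + 2) / v)) d (f * ((k + 2) / v)) ≠ 0 ∧
      Nmin k α' (γ' * ((k + 2) / v)) a' (c' * ((k + 2) / v)) d' (f' * ((k + 2) / v)) ≠ 0 := by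
  obtain ⟨⟨α, γ, hN⟩, hpartner⟩ := fusion_consistency_M0_general hk hv1 hv2 ha hd hP1 hP2
  obtain ⟨α', γ', hα', hP, hN'⟩ := hpartner α γ hN
  exact ⟨α, γ, α', γ', mem_range_of_Nmin_ne_zero hN, hα', hP, hN, hN'⟩
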